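/- arXiv:0801.2856 — 3 statements merged into one kernel-verified Lean document; each statement's English description precedes it below -/
import Mathlib

section
/- If Γ is a completed primitive simple graph, then Γ has vertex-connectivity at least 3; that is, for every set S of at most 2 vertices of Γ, the subgraph of Γ induced on the complement of S is connected. -/
/-!
Suppose deleting `S` disconnects `G`, leaving nonempty sides `A` and `B` with no edge between them.
A vertex of `A` has more neighbours than `S` has elements, hence a neighbour in `A`; so `A`, and
likewise `B`, has at least two vertices, and primitivity puts at least `5` edges in each of the two
cuts. The cuts are disjoint and all their edges meet `S`, but at most `2 * 4 < 5 + 5` edges do.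
-/

open scoped Classical

/-- The set of edges of `G` with one endpoint in `A` and the other outside `A`. -/
noncomputable def cutEdges {V : Type*} [Fintype V] (G : SimpleGraph V) (A : Finset V) :
    Finset (Sym2 V) :=
  G.edgeFinset.filter (fun e => ∃ x, x ∈ e ∧ x ∈ A ∧ ∃ y, y ∈ e ∧ y ∉ A)

/-- A finite simple graph is *completed primitive* if it is 4-regular, connected, has at
least 3 vertices, and every edge cut separating two parts with at least two vertices each
has size strictly greater than 4. -/
def CompletedPrimitive {V : Type*} [Fintype V] (G : SimpleGraph V) : Prop :=
  (∀ v : V, G.degree v = 4) ∧ G.Connected ∧ 3 ≤ Fintype.card V ∧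
    ∀ A : Finset V, 2 ≤ A.card → 2 ≤ Aᶜ.card → 4 < (cutEdges G A).card

section Cut

variable {V : Type*} [Fintype V] {G : SimpleGraph V} {A B S : Finset V}

lemma mem_cutEdges {e : Sym2 V} :
    e ∈ cutEdges G A ↔ ∃ x ∈ A, ∃ y ∉ A, G.Adj x y ∧ e = s(x, y) := by
  simp only [cutEdges, Finset.mem_filter, SimpleGraph.mem_edgeFinset]
  constructor
  · rintro ⟨he, x, hxe, hxA, y, hye, hyA⟩
    obtain rfl : e = s(x, y) :=
      (Sym2.mem_and_mem_iff (ne_of_mem_of_not_mem hxA hyA)).mp ⟨hxe, hye⟩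
    exact ⟨x, hxA, y, hyA, he, rfl⟩
  · rintro ⟨x, hxA, y, hyA, hxy, rfl⟩
    exact ⟨hxy, x, Sym2.mem_mk_left x y, hxA, y, Sym2.mem_mk_right x y, hyA⟩

lemma disjoint_cutEdges (hAB : Disjoint A B) (hadj : ∀ a ∈ A, ∀ b ∈ B, ¬ G.Adj a b) :
    Disjoint (cutEdges G A) (cutEdges G B) := by
  refine Finset.disjoint_left.mpr fun e heA heB ↦ ?_
  obtain ⟨x, hxA, y, -, hxy, rfl⟩ := mem_cutEdges.mp heA
  obtain ⟨b, hbB, z, -, -, hbz⟩ := mem_cutEdges.mp heB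
  have hb : b = x ∨ b = y := Sym2.mem_iff.mp (hbz ▸ Sym2.mem_mk_left b z)
  rcases hb with rfl | rfl
  · exact Finset.disjoint_left.mp hAB hxA hbB
  · exact hadj x hxA b hbB hxy

lemma card_biUnion_incidenceFinset_le_sum_degree :
    (S.biUnion fun s ↦ G.incidenceFinset s).card ≤ ∑ s ∈ S, G.degree s :=
  Finset.card_biUnion_le.trans_eq
    (Finset.sum_congr rfl fun s _ ↦ G.card_incidenceFinset_eq_degree s)

end Cut

/-- `S` separates `A` from `B`: disjoint nonempty sides with no edge between them that together
contain every vertex outside `S`. This witnesses that deleting `S` disconnects `G`, except that the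
sides may also contain vertices of `S`, since the counting argument allows it. -/
structure IsVertexSeparation {V : Type*} (G : SimpleGraph V) (S A B : Finset V) : Prop where
  left_nonempty : A.Nonempty
  right_nonempty : B.Nonempty
  disjoint : Disjoint A B
  mem_or_mem_of_notMem : ∀ v ∉ S, v ∈ A ∨ v ∈ B
  not_adj : ∀ a ∈ A, ∀ b ∈ B, ¬ G.Adj a b

namespace IsVertexSeparation

variable {V : Type*} {G : SimpleGraph V} {S A B : Finset V}

lemma symm (h : IsVertexSeparation G S A B) : IsVertexSeparation G S B A where
  left_nonempty := h.right_nonempty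
  right_nonempty := h.left_nonempty
  disjoint := h.disjoint.symm
  mem_or_mem_of_notMem v hv := (h.mem_or_mem_of_notMem v hv).symm
  not_adj b hb a ha hba := h.not_adj a ha b hb hba.symm

lemma mem_of_adj (h : IsVertexSeparation G S A B) {a b : V} (ha : a ∈ A) (hab : G.Adj a b)
    (hb : b ∉ A) : b ∈ S := by
  by_contra hbS
  have hbB : b ∈ B := (h.mem_or_mem_of_notMem b hbS).resolve_left hb
  exact h.not_adj a ha b hbB hab

lemma exists_of_not_preconnected [Finite V] (h : ¬ (G.induce (S : Set V)ᶜ).Preconnected) :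
    ∃ A B, IsVertexSeparation G S A B := by
  have := Fintype.ofFinite V
  obtain ⟨u, v, huv⟩ : ∃ u v, ¬ (G.induce (S : Set V)ᶜ).Reachable u v := by
    simpa only [SimpleGraph.Preconnected, not_forall] using h
  let C := (G.induce (S : Set V)ᶜ).connectedComponentMk u
  let A : Finset V := {w | ∃ hw : w ∈ (S : Set V)ᶜ, ⟨w, hw⟩ ∈ C.supp}
  have mem_A {w : V} : w ∈ A ↔ ∃ hw : w ∈ (S : Set V)ᶜ, ⟨w, hw⟩ ∈ C.supp :=
    Finset.mem_filter_univ w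
  have hvA : ↑v ∉ A := fun hv ↦
    let ⟨_, hvC⟩ := mem_A.mp hv
    huv (SimpleGraph.ConnectedComponent.exact hvC).symm
  refine ⟨A, (A ∪ S)ᶜ, ⟨u, mem_A.mpr ⟨u.2, rfl⟩⟩, ⟨v, ?_⟩, ?_, fun w hw ↦ ?_, ?_⟩
  · simpa only [Finset.mem_compl, Finset.mem_union, hvA, false_or] using! v.2
  · exact disjoint_compl_right.mono_left Finset.subset_union_left
  · by_cases hwA : w ∈ A <;> simp [hwA, hw]
  · intro a ha b hb hab
    simp only [Finset.mem_compl, Finset.mem_union, not_or] at hb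
    obtain ⟨haS, haC⟩ := mem_A.mp ha
    exact hb.1 (mem_A.mpr ⟨hb.2, C.mem_supp_of_adj_mem_supp haC hab⟩)

variable [Fintype V]

lemma cutEdges_subset (h : IsVertexSeparation G S A B) :
    cutEdges G A ⊆ S.biUnion fun s ↦ G.incidenceFinset s := by
  intro e he
  obtain ⟨x, hxA, y, hyA, hxy, rfl⟩ := mem_cutEdges.mp he
  refine Finset.mem_biUnion.mpr ⟨y, h.mem_of_adj hxA hxy hyA, ?_⟩
  exact (G.mem_incidenceFinset y _).mpr ⟨hxy, Sym2.mem_mk_right x y⟩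

lemma card_cutEdges_add_card_cutEdges_le (h : IsVertexSeparation G S A B) :
    (cutEdges G A).card + (cutEdges G B).card ≤ ∑ s ∈ S, G.degree s :=
  calc (cutEdges G A).card + (cutEdges G B).card
      = (cutEdges G A ∪ cutEdges G B).card :=
        (Finset.card_union_of_disjoint (disjoint_cutEdges h.disjoint h.not_adj)).symm
    _ ≤ (S.biUnion fun s ↦ G.incidenceFinset s).card :=
        Finset.card_le_card (Finset.union_subset h.cutEdges_subset h.symm.cutEdges_subset)
    _ ≤ ∑ s ∈ S, G.degree s := card_biUnion_incidenceFinset_le_sum_degree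

lemma two_le_card_left (h : IsVertexSeparation G S A B) (hdeg : ∀ a ∈ A, S.card < G.degree a) :
    2 ≤ A.card := by
  obtain ⟨a, ha⟩ := h.left_nonempty
  obtain ⟨b, hb, hbS⟩ : ∃ b ∈ G.neighborFinset a, b ∉ S :=
    Finset.exists_mem_notMem_of_card_lt_card (hdeg a ha)
  have hab : G.Adj a b := (G.mem_neighborFinset a b).mp hb
  have hbA : b ∈ A := by_contra fun hbA ↦ hbS (h.mem_of_adj ha hab hbA)
  exact Finset.one_lt_card.mpr ⟨a, ha, b, hbA, hab.ne⟩

lemma le_card_cutEdges_left (h : IsVertexSeparation G S A B) {c : ℕ}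
    (hdeg : ∀ v, S.card < G.degree v)
    (hcut : ∀ X : Finset V, 2 ≤ X.card → 2 ≤ Xᶜ.card → c ≤ (cutEdges G X).card) :
    c ≤ (cutEdges G A).card := by
  have hBA : B ⊆ Aᶜ := Finset.subset_compl_iff_disjoint_left.mpr h.disjoint
  have hB : 2 ≤ B.card := h.symm.two_le_card_left fun b _ ↦ hdeg b
  exact hcut A (h.two_le_card_left fun a _ ↦ hdeg a) (hB.trans (Finset.card_le_card hBA))

end IsVertexSeparation

theorem completedPrimitive_vertexConnectivity_ge_three_general {V : Type*} [Fintype V] [Nonempty V]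
    {G : SimpleGraph V} {S : Finset V} {c : ℕ}
    (hcut : ∀ A : Finset V, 2 ≤ A.card → 2 ≤ Aᶜ.card → c ≤ (cutEdges G A).card)
    (hdeg : ∀ v, S.card < G.degree v) (hsum : ∑ s ∈ S, G.degree s < 2 * c) :
    (G.induce (S : Set V)ᶜ).Connected := by
  obtain ⟨w, -, hw⟩ : ∃ w ∈ G.neighborFinset (Classical.arbitrary V), w ∉ S :=
    Finset.exists_mem_notMem_of_card_lt_card (hdeg _)
  have : Nonempty ((S : Set V)ᶜ : Set V) := ⟨w, hw⟩
  refine ⟨by_contra fun hS ↦ ?_⟩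
  obtain ⟨A, B, hAB⟩ := IsVertexSeparation.exists_of_not_preconnected hS
  have hA : c ≤ (cutEdges G A).card := hAB.le_card_cutEdges_left hdeg hcut
  have hB : c ≤ (cutEdges G B).card := hAB.symm.le_card_cutEdges_left hdeg hcut
  have hsides := hAB.card_cutEdges_add_card_cutEdges_le
  omega

/-- A completed primitive graph has vertex-connectivity at least 3: removing any set of
at most 2 vertices leaves a connected induced subgraph. -/
theorem completedPrimitive_vertexConnectivity_ge_three {V : Type*} [Fintype V]
    (G : SimpleGraph V) (h : CompletedPrimitive G) :
    ∀ S : Finset V, S.card ≤ 2 → (G.induce ((↑S : Set V)ᶜ)).Connected := by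
  intro S hS
  obtain ⟨hdeg, hconn, -, hcut⟩ := h
  have := hconn.nonempty
  exact completedPrimitive_vertexConnectivity_ge_three_general (c := 5) hcut
    (fun v ↦ by rw [hdeg v]; omega) (by simp only [hdeg, Finset.sum_const, smul_eq_mul]; omega)
end

section
/- Let Γ be a finite simple 4-regular graph with at least 3 vertices and let v be any vertex of Γ. Then the vertex-deleted subgraph Γ − v is primitive if and only if Γ is completed primitive. -/
open scoped Classical

/-- The cycle rank `h₁ = n − N + c` of the subgraph of a graph on `V` determined by an
edge set `Es` together with the endpoints of those edges. -/
noncomputable def edgeSubgraphCycleRank {V : Type*} [Fintype V] (Es : Finset (Sym2 V)) : ℤ :=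
  (Es.card : ℤ)
    - ((Finset.univ.filter (fun v : V => ∃ e ∈ Es, v ∈ e)).card : ℤ)
    + (Nat.card ((SimpleGraph.fromEdgeSet (↑Es : Set (Sym2 V))).induce
        {v : V | ∃ e ∈ Es, v ∈ e}).ConnectedComponent : ℤ)

/-- The cycle rank `h₁ = n − N + c` of a finite graph (with vertex set the whole type). -/
noncomputable def cycleRank {V : Type*} [Fintype V] (G : SimpleGraph V) : ℤ :=
  (G.edgeFinset.card : ℤ) - (Fintype.card V : ℤ) + (Nat.card G.ConnectedComponent : ℤ)

/-- A finite graph `G` is *primitive* if `n(G) = 2·h₁(G)` and every proper subgraph given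
by a nonempty proper subset of the edges (with the endpoints of those edges as vertices)
satisfies `n(γ) > 2·h₁(γ)`. -/
noncomputable def IsPrimitive {V : Type*} [Fintype V] (G : SimpleGraph V) : Prop :=
  (G.edgeFinset.card : ℤ) = 2 * cycleRank G ∧
    ∀ Es : Finset (Sym2 V), Es ⊆ G.edgeFinset → Es.Nonempty → Es ≠ G.edgeFinset →
      2 * edgeSubgraphCycleRank Es < (Es.card : ℤ)

/-!
Write `e(A)` for the number of edges inside a vertex set `A`. Summing degrees over `A` in the
4-regular graph `Γ` gives `4 |A| = 2 e(A) + |∂A|`, so `|∂A| > 4` means `e(A) < 2 |A| - 2`. As a cut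
does not change when `A` is replaced by its complement, all nontrivial cuts of `Γ` are larger than 4
iff every proper `A ⊆ V(Γ - v)` with at least two vertices satisfies `e(A) < 2 |A| - 2`.

Since `Γ - v` has `2 N - 2` edges on `N` vertices, `n = 2 h₁` says that it is connected. A subgraph
with `n` edges, `N` vertices and `c` components satisfies `n > 2 h₁` iff `n < 2 N - 2 c`. Applied to
the edges inside `A` this gives the sparsity bound; conversely, summing the sparsity bound over the
components of a subgraph gives `n ≤ 2 N - 3 c`.

Connectedness of `Γ` itself comes for free, because the cut of a component is empty.
-/

section

open Finset SimpleGraph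

lemma card_connectedComponent_induce_support_pos {V : Type*} [Finite V] {K : SimpleGraph V}
    (hK : K ≠ ⊥) : 0 < Nat.card (K.induce K.support).ConnectedComponent := by
  have : Nonempty K.support :=
    Set.nonempty_coe_sort.2 (Set.nonempty_iff_ne_empty.2 (mt K.support_eq_bot_iff.1 hK))
  exact Nat.card_pos

variable {V : Type*} [Fintype V]

/-- The edges of `G` with both endpoints in `A`, i.e. the edges of the induced subgraph `G[A]`,
kept as edges of `G` so that they can be compared for different `A`. -/
noncomputable def innerEdges (G : SimpleGraph V) (A : Finset V) : Finset (Sym2 V) :=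
  G.edgeFinset ∩ A.sym2

lemma mk_mem_innerEdges {G : SimpleGraph V} {A : Finset V} {x y : V} :
    s(x, y) ∈ innerEdges G A ↔ G.Adj x y ∧ x ∈ A ∧ y ∈ A := by
  rw [innerEdges, mem_inter, mem_edgeFinset, mem_edgeSet, mk_mem_sym2_iff]

lemma innerEdges_univ (G : SimpleGraph V) [Fintype G.edgeSet] :
    innerEdges G univ = G.edgeFinset := by
  ext
  simp [innerEdges]

lemma innerEdges_singleton (G : SimpleGraph V) (v : V) : innerEdges G {v} = ∅ := by
  simp [innerEdges, Sym2.diag]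

lemma innerEdges_mono {K G : SimpleGraph V} (h : K ≤ G) (A : Finset V) :
    innerEdges K A ⊆ innerEdges G A :=
  inter_subset_inter_right (edgeFinset_subset_edgeFinset.2 h)

lemma card_innerEdges_induce (G : SimpleGraph V) (s : Set V) [Fintype s] (A : Finset s) :
    #(innerEdges (G.induce s) A) = #(innerEdges G (A.map (.subtype (· ∈ s)))) := by
  have hmap : innerEdges G (A.map (.subtype (· ∈ s))) =
      (innerEdges (G.induce s) A).map (Function.Embedding.subtype (· ∈ s)).sym2Map := by
    ext e
    constructor
    · induction e with | _ x y
      rw [mk_mem_innerEdges]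
      rintro ⟨hxy, hx, hy⟩
      obtain ⟨a, ha, rfl⟩ := mem_map.1 hx
      obtain ⟨b, hb, rfl⟩ := mem_map.1 hy
      have hmem : s(a, b) ∈ innerEdges (G.induce s) A := mk_mem_innerEdges.2 ⟨hxy, ha, hb⟩
      exact mem_map_of_mem _ hmem
    · rw [mem_map]
      rintro ⟨d, hd, rfl⟩
      induction d with | _ x y
      obtain ⟨hxy, hx, hy⟩ := mk_mem_innerEdges.1 hd
      exact mk_mem_innerEdges.2 ⟨hxy, mem_map_of_mem _ hx, mem_map_of_mem _ hy⟩
  rw [hmap, card_map]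

lemma cutEdges_compl (G : SimpleGraph V) (A : Finset V) : cutEdges G Aᶜ = cutEdges G A := by
  refine filter_congr fun e _ => ?_
  simp only [mem_compl, not_not]
  grind

lemma card_filter_mem_edge {G : SimpleGraph V} {e : Sym2 V} (he : e ∈ G.edgeFinset)
    (A : Finset V) :
    #{w ∈ A | w ∈ e} =
      2 * (if e ∈ innerEdges G A then 1 else 0) + (if e ∈ cutEdges G A then 1 else 0) := by
  induction e with | _ x y
  have hne : x ≠ y := G.ne_of_adj (mem_edgeFinset.1 he)
  have hmem : {w ∈ A | w ∈ s(x, y)} = {w ∈ ({x, y} : Finset V) | w ∈ A} := by grind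
  rw [hmem]
  by_cases hx : x ∈ A <;> by_cases hy : y ∈ A <;>
    simp_all [mk_mem_innerEdges, cutEdges, filter_insert, filter_singleton]

theorem sum_degree_eq_two_mul_card_innerEdges_add_card_cutEdges (G : SimpleGraph V)
    (A : Finset V) :
    ∑ w ∈ A, G.degree w = 2 * #(innerEdges G A) + #(cutEdges G A) := by
  calc ∑ w ∈ A, G.degree w
      = ∑ w ∈ A, #{e ∈ G.edgeFinset | w ∈ e} :=
        sum_congr rfl fun w _ => by
          rw [← card_incidenceFinset_eq_degree, incidenceFinset_eq_filter]
    _ = ∑ e ∈ G.edgeFinset, #{w ∈ A | w ∈ e} :=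
        sum_card_bipartiteAbove_eq_sum_card_bipartiteBelow _
    _ = 2 * #{e ∈ G.edgeFinset | e ∈ innerEdges G A} + #{e ∈ G.edgeFinset | e ∈ cutEdges G A} := by
        rw [sum_congr rfl fun e he => card_filter_mem_edge he A, sum_add_distrib, ← mul_sum,
          card_filter, card_filter]
    _ = 2 * #(innerEdges G A) + #(cutEdges G A) := by
        have hinner : innerEdges G A ⊆ G.edgeFinset := inter_subset_left
        have hcut : cutEdges G A ⊆ G.edgeFinset := filter_subset _ _
        rw [filter_mem_eq_inter, filter_mem_eq_inter, inter_eq_right.2 hinner,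
          inter_eq_right.2 hcut]

lemma card_edgeFinset_le_sum_card_innerEdges_supp (G : SimpleGraph V) [Fintype G.edgeSet] :
    #G.edgeFinset ≤ ∑ c : G.ConnectedComponent, #(innerEdges G c.supp.toFinset) := by
  refine (card_le_card fun e he => ?_).trans card_biUnion_le
  induction e with | _ x y
  have hxy : G.Adj x y := mem_edgeFinset.1 he
  simpa [mk_mem_innerEdges, hxy] using hxy.reachable.symm

lemma sum_card_supp (G : SimpleGraph V) :
    ∑ c : G.ConnectedComponent, #c.supp.toFinset = Fintype.card V := by
  rw [← card_univ, card_eq_sum_card_fiberwise (f := G.connectedComponentMk) (t := univ) (by simp)]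
  refine sum_congr rfl fun c _ => congrArg card ?_
  ext
  simp

theorem card_edgeFinset_add_mul_card_connectedComponent_le {G : SimpleGraph V}
    [Fintype G.edgeSet] {k l : ℕ}
    (h : ∀ c : G.ConnectedComponent,
      #(innerEdges G c.supp.toFinset) + l ≤ k * #c.supp.toFinset) :
    #G.edgeFinset + l * Nat.card G.ConnectedComponent ≤ k * Fintype.card V := by
  calc #G.edgeFinset + l * Nat.card G.ConnectedComponent
      ≤ ∑ c : G.ConnectedComponent, (#(innerEdges G c.supp.toFinset) + l) := by
        rw [sum_add_distrib, sum_const, card_univ, smul_eq_mul, mul_comm, Nat.card_eq_fintype_card]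
        gcongr
        exact card_edgeFinset_le_sum_card_innerEdges_supp G
    _ ≤ ∑ c : G.ConnectedComponent, k * #c.supp.toFinset := sum_le_sum fun c _ => h c
    _ = k * Fintype.card V := by rw [← mul_sum, sum_card_supp]

lemma two_le_card_supp_of_forall_exists_adj {G : SimpleGraph V} (h : ∀ x, ∃ y, G.Adj x y)
    (c : G.ConnectedComponent) : 2 ≤ #c.supp.toFinset := by
  induction c using ConnectedComponent.ind with | _ x
  obtain ⟨y, hxy⟩ := h x
  exact one_lt_card.2 ⟨x, by simp, y, by simpa using hxy.reachable.symm, hxy.ne⟩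

lemma exists_edgeFinset_eq_of_subset {G : SimpleGraph V} {Es : Finset (Sym2 V)}
    (h : Es ⊆ G.edgeFinset) : ∃ K : SimpleGraph V, K.edgeFinset = Es := by
  refine ⟨fromEdgeSet Es, ?_⟩
  ext e
  simpa using fun he => not_isDiag_of_mem_edgeFinset (h he)

lemma cycleRank_induce_support (K : SimpleGraph V) :
    cycleRank (K.induce K.support) = #K.edgeFinset - K.support.ncard +
      Nat.card (K.induce K.support).ConnectedComponent := by
  rw [cycleRank, Set.fintypeCard_eq_ncard]
  congr 3
  convert K.card_edgeFinset_induce_support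

theorem edgeSubgraphCycleRank_edgeFinset (K : SimpleGraph V) :
    edgeSubgraphCycleRank K.edgeFinset = cycleRank (K.induce K.support) := by
  have hsupp : {v | ∃ e ∈ K.edgeFinset, v ∈ e} = K.support := by
    ext v
    constructor
    · rintro ⟨e, he, hv⟩
      obtain ⟨w, rfl⟩ := Sym2.mem_iff_exists.1 hv
      exact ⟨w, mem_edgeFinset.1 he⟩
    · rintro ⟨w, hw⟩
      exact ⟨s(v, w), mem_edgeFinset.2 hw, Sym2.mem_mk_left v w⟩
  have hverts : #{v | ∃ e ∈ K.edgeFinset, v ∈ e} = K.support.ncard := by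
    rw [← hsupp, ← Set.ncard_coe_finset, coe_filter_univ]
  rw [edgeSubgraphCycleRank, cycleRank_induce_support, coe_edgeFinset, fromEdgeSet_edgeSet, hsupp,
    hverts]

theorem isPrimitive_iff_forall_lt (G : SimpleGraph V) :
    IsPrimitive G ↔ (#G.edgeFinset : ℤ) = 2 * cycleRank G ∧
      ∀ K < G, K ≠ ⊥ → 2 * cycleRank (K.induce K.support) < #K.edgeFinset := by
  refine and_congr_right fun _ => ⟨fun h K hK hne => ?_, fun h Es hsub hne hproper => ?_⟩
  · rw [← edgeSubgraphCycleRank_edgeFinset]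
    exact h _ (edgeFinset_subset_edgeFinset.2 hK.le) (edgeFinset_nonempty.2 hne)
      (edgeFinset_inj.not.2 hK.ne)
  · obtain ⟨K, rfl⟩ := exists_edgeFinset_eq_of_subset hsub
    rw [edgeSubgraphCycleRank_edgeFinset]
    exact h K (edgeFinset_ssubset_edgeFinset.1 (hsub.ssubset_of_ne hproper))
      (edgeFinset_nonempty.1 hne)

lemma cutEdges_supp {G : SimpleGraph V} (c : G.ConnectedComponent) :
    cutEdges G c.supp.toFinset = ∅ := by
  refine filter_eq_empty_iff.2 ?_
  rintro e he ⟨x, hx, hxc, y, hy, hyc⟩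
  have hxy : x ≠ y := by rintro rfl; exact hyc hxc
  rw [(Sym2.mem_and_mem_iff hxy).1 ⟨hx, hy⟩, mem_edgeFinset, mem_edgeSet] at he
  rw [Set.mem_toFinset] at hxc hyc
  exact hyc (c.mem_supp_of_adj_mem_supp hxc he)

theorem preconnected_of_cutEdges_nonempty {G : SimpleGraph V} (hadj : ∀ x, ∃ y, G.Adj x y)
    (hcut : ∀ A : Finset V, 2 ≤ #A → 2 ≤ #Aᶜ → (cutEdges G A).Nonempty) : G.Preconnected := by
  refine fun x y => ConnectedComponent.exact ?_
  set c := G.connectedComponentMk x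
  set d := G.connectedComponentMk y
  by_contra hcd
  have hdisj : d.supp.toFinset ⊆ c.supp.toFinsetᶜ := by
    rw [subset_compl_iff_disjoint_left, Set.disjoint_toFinset]
    exact pairwise_disjoint_supp_connectedComponent G hcd
  have hd := (two_le_card_supp_of_forall_exists_adj hadj d).trans (card_le_card hdisj)
  exact (hcut _ (two_le_card_supp_of_forall_exists_adj hadj c) hd).ne_empty (cutEdges_supp c)

/-- Every proper vertex set `A` with at least two elements spans at most `2 |A| - 3` edges, the
sparsity condition of Laman graphs imposed on proper subsets only. It is the common translation of
primitivity of `Γ - v` and of the cut condition on `Γ`. The bound is stated without truncated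
subtraction. -/
def IsProperlySparse (G : SimpleGraph V) : Prop :=
  ∀ A : Finset V, 2 ≤ #A → A ≠ univ → #(innerEdges G A) + 2 < 2 * #A

lemma card_edgeFinset_eq_two_mul_cycleRank_iff {G : SimpleGraph V}
    (hE : #G.edgeFinset + 2 = 2 * Fintype.card V) :
    (#G.edgeFinset : ℤ) = 2 * cycleRank G ↔ Nat.card G.ConnectedComponent = 1 := by
  rw [cycleRank]
  omega

lemma two_mul_cycleRank_induce_support_lt_iff (K : SimpleGraph V) :
    2 * cycleRank (K.induce K.support) < #K.edgeFinset ↔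
      #K.edgeFinset + 2 * Nat.card (K.induce K.support).ConnectedComponent <
        2 * K.support.ncard := by
  rw [cycleRank_induce_support]
  omega

lemma support_subset_of_edgeFinset_eq_innerEdges {K G : SimpleGraph V} {A : Finset V}
    (h : K.edgeFinset = innerEdges G A) : K.support ⊆ A := by
  rintro x ⟨y, hxy⟩
  have hmem : s(x, y) ∈ innerEdges G A := h ▸ mem_edgeFinset.2 hxy
  exact (mk_mem_innerEdges.1 hmem).2.1

lemma lt_of_edgeFinset_eq_innerEdges {K G : SimpleGraph V} (hG : ∀ x, ∃ y, G.Adj x y)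
    {A : Finset V} (hA : A ≠ univ) (h : K.edgeFinset = innerEdges G A) : K < G := by
  refine lt_of_le_of_ne ?_ fun heq => hA (eq_univ_of_forall fun x => ?_)
  · rw [← edgeFinset_subset_edgeFinset, h]
    exact inter_subset_left
  · exact support_subset_of_edgeFinset_eq_innerEdges h (heq ▸ hG x)

theorem IsPrimitive.preconnected {G : SimpleGraph V} (hG : IsPrimitive G)
    (hE : #G.edgeFinset + 2 = 2 * Fintype.card V) : G.Preconnected := by
  have hcard := (card_edgeFinset_eq_two_mul_cycleRank_iff hE).1 hG.1
  have := (Nat.card_eq_one_iff_unique.1 hcard).1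
  exact fun x y => ConnectedComponent.exact (Subsingleton.elim _ _)

theorem IsPrimitive.isProperlySparse {G : SimpleGraph V} (hG : IsPrimitive G)
    (hE : #G.edgeFinset + 2 = 2 * Fintype.card V) : IsProperlySparse G := by
  intro A hA hAuniv
  have : Nontrivial V := Fintype.one_lt_card_iff_nontrivial.1 (hA.trans (card_le_univ A))
  obtain ⟨K, hKE⟩ : ∃ K : SimpleGraph V, K.edgeFinset = innerEdges G A :=
    exists_edgeFinset_eq_of_subset inter_subset_left
  rw [← hKE]
  rcases eq_or_ne K ⊥ with hbot | hbot
  · rw [edgeFinset_eq_empty.2 hbot, card_empty]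
    omega
  have hKG : K < G :=
    lt_of_edgeFinset_eq_innerEdges (hG.preconnected hE).exists_adj_of_nontrivial hAuniv hKE
  have hrank := ((isPrimitive_iff_forall_lt G).1 hG).2 K hKG hbot
  have hsupp : K.support.ncard ≤ #A := by
    rw [← Set.ncard_coe_finset A]
    exact Set.ncard_le_ncard (support_subset_of_edgeFinset_eq_innerEdges hKE)
  have hpos := card_connectedComponent_induce_support_pos hbot
  rw [two_mul_cycleRank_induce_support_lt_iff] at hrank
  omega

lemma IsProperlySparse.card_innerEdges_add_two_le {G : SimpleGraph V} (hG : IsProperlySparse G)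
    (hE : #G.edgeFinset + 2 = 2 * Fintype.card V) {A : Finset V} (hA : A.Nonempty) :
    #(innerEdges G A) + 2 ≤ 2 * #A := by
  rcases eq_or_ne A univ with rfl | hAuniv
  · rw [innerEdges_univ, card_univ, hE]
  rcases hA.exists_eq_singleton_or_nontrivial with ⟨x, rfl⟩ | hA
  · simp [innerEdges_singleton]
  · exact (hG A (one_lt_card_iff_nontrivial.2 hA) hAuniv).le

lemma IsProperlySparse.card_innerEdges_add_two_lt_of_lt {K G : SimpleGraph V}
    (hG : IsProperlySparse G) (hE : #G.edgeFinset + 2 = 2 * Fintype.card V) (hK : K < G)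
    {A : Finset V} (hA : 2 ≤ #A) : #(innerEdges K A) + 2 < 2 * #A := by
  rcases eq_or_ne A univ with rfl | hAuniv
  · rw [innerEdges_univ, card_univ, ← hE]
    gcongr
  · exact lt_of_le_of_lt (by gcongr; exact innerEdges_mono hK.le A) (hG A hA hAuniv)

theorem IsProperlySparse.card_connectedComponent_eq_one {G : SimpleGraph V}
    (hG : IsProperlySparse G) (hE : #G.edgeFinset + 2 = 2 * Fintype.card V) :
    Nat.card G.ConnectedComponent = 1 := by
  have : Nonempty V := Fintype.card_pos_iff.1 (by omega)
  have hpos : 0 < Nat.card G.ConnectedComponent := Nat.card_pos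
  have hle := card_edgeFinset_add_mul_card_connectedComponent_le fun c : G.ConnectedComponent =>
    hG.card_innerEdges_add_two_le hE (Set.toFinset_nonempty.2 c.nonempty_supp)
  omega

theorem IsProperlySparse.two_mul_cycleRank_induce_support_lt {K G : SimpleGraph V}
    (hG : IsProperlySparse G) (hE : #G.edgeFinset + 2 = 2 * Fintype.card V) (hK : K < G)
    (hne : K ≠ ⊥) : 2 * cycleRank (K.induce K.support) < #K.edgeFinset := by
  have hadj : ∀ x, ∃ y, (K.induce K.support).Adj x y :=
    fun ⟨_, y, hxy⟩ => ⟨⟨y, hxy.mem_support_right⟩, hxy⟩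
  have hsparse : ∀ B : Finset K.support, 2 ≤ #B →
      #(innerEdges (K.induce K.support) B) + 3 ≤ 2 * #B := by
    intro B hB
    have hcard : #(B.map (.subtype (· ∈ K.support))) = #B := card_map _
    rw [card_innerEdges_induce, ← hcard]
    exact hG.card_innerEdges_add_two_lt_of_lt hE hK (hcard.symm ▸ hB)
  have hle := card_edgeFinset_add_mul_card_connectedComponent_le fun c =>
    hsparse _ (two_le_card_supp_of_forall_exists_adj hadj c)
  have hpos := card_connectedComponent_induce_support_pos hne
  have hedges : #(K.induce K.support).edgeFinset = #K.edgeFinset := by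
    convert K.card_edgeFinset_induce_support
  rw [two_mul_cycleRank_induce_support_lt_iff]
  rw [Set.fintypeCard_eq_ncard] at hle
  omega

theorem isPrimitive_iff_isProperlySparse {G : SimpleGraph V}
    (hE : #G.edgeFinset + 2 = 2 * Fintype.card V) : IsPrimitive G ↔ IsProperlySparse G :=
  ⟨fun hG => hG.isProperlySparse hE, fun hG => (isPrimitive_iff_forall_lt G).2
    ⟨(card_edgeFinset_eq_two_mul_cycleRank_iff hE).2 (hG.card_connectedComponent_eq_one hE),
      fun _ hK hne => hG.two_mul_cycleRank_induce_support_lt hE hK hne⟩⟩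

lemma two_mul_card_innerEdges_add_card_cutEdges {G : SimpleGraph V} {d : ℕ}
    (hG : G.IsRegularOfDegree d) (A : Finset V) :
    2 * #(innerEdges G A) + #(cutEdges G A) = d * #A := by
  rw [← sum_degree_eq_two_mul_card_innerEdges_add_card_cutEdges,
    sum_congr rfl fun w _ => hG.degree_eq w, sum_const, smul_eq_mul, mul_comm]

lemma four_lt_card_cutEdges_iff {G : SimpleGraph V} (hG : G.IsRegularOfDegree 4) (A : Finset V) :
    4 < #(cutEdges G A) ↔ #(innerEdges G A) + 2 < 2 * #A := by
  have hsum := two_mul_card_innerEdges_add_card_cutEdges hG A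
  omega

lemma map_subtype_univ_compl_singleton (v : V) [Fintype ({v}ᶜ : Set V)] :
    (univ : Finset ({v}ᶜ : Set V)).map (.subtype (· ∈ ({v}ᶜ : Set V))) = {v}ᶜ := by
  ext
  simp

lemma card_compl_singleton_eq_fintypeCard (v : V) [Fintype ({v}ᶜ : Set V)] :
    #({v}ᶜ : Finset V) = Fintype.card ({v}ᶜ : Set V) := by
  rw [← map_subtype_univ_compl_singleton, card_map, card_univ]

lemma card_edgeFinset_induce_compl_singleton_add_two {G : SimpleGraph V}
    (hG : G.IsRegularOfDegree 4) (v : V) :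
    #(G.induce ({v}ᶜ : Set V)).edgeFinset + 2 = 2 * Fintype.card ({v}ᶜ : Set V) := by
  have hcut : #(cutEdges G {v}) = 4 := by
    simpa [innerEdges_singleton] using two_mul_card_innerEdges_add_card_cutEdges hG {v}
  have hsum := two_mul_card_innerEdges_add_card_cutEdges hG {v}ᶜ
  rw [cutEdges_compl, hcut, card_compl_singleton_eq_fintypeCard, ← map_subtype_univ_compl_singleton,
    ← card_innerEdges_induce, innerEdges_univ] at hsum
  omega

theorem isProperlySparse_induce_compl_singleton_iff {G : SimpleGraph V} {v : V} :
    IsProperlySparse (G.induce ({v}ᶜ : Set V)) ↔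
      ∀ A : Finset V, v ∉ A → 2 ≤ #A → 2 ≤ #Aᶜ → #(innerEdges G A) + 2 < 2 * #A := by
  refine ⟨fun h A hvA hA hAc => ?_, fun h B hB hBuniv => ?_⟩
  · obtain ⟨B, rfl⟩ : ∃ B : Finset ({v}ᶜ : Set V), B.map (.subtype (· ∈ ({v}ᶜ : Set V))) = A :=
      ⟨A.subtype _, subtype_map_of_mem fun x hx => by rintro rfl; exact hvA hx⟩
    rw [card_map] at hA ⊢
    rw [← card_innerEdges_induce]
    refine h B hA ?_
    rintro rfl
    rw [map_subtype_univ_compl_singleton, compl_compl, card_singleton] at hAc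
    omega
  · have hcard : #(B.map (.subtype (· ∈ ({v}ᶜ : Set V)))) = #B := card_map _
    have hlt : #B < #({v}ᶜ : Finset V) := by
      rw [card_compl_singleton_eq_fintypeCard]
      exact (card_lt_iff_ne_univ B).2 hBuniv
    rw [card_innerEdges_induce, ← hcard]
    refine h _ (by simp) (hcard.symm ▸ hB) ?_
    rw [card_compl, card_singleton] at hlt
    rw [card_compl, hcard]
    omega

theorem isProperlySparse_induce_compl_singleton_iff_forall_four_lt_card_cutEdges
    {G : SimpleGraph V} (hG : G.IsRegularOfDegree 4) {v : V} :
    IsProperlySparse (G.induce ({v}ᶜ : Set V)) ↔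
      ∀ A : Finset V, 2 ≤ #A → 2 ≤ #Aᶜ → 4 < #(cutEdges G A) := by
  simp only [isProperlySparse_induce_compl_singleton_iff, ← four_lt_card_cutEdges_iff hG]
  refine ⟨fun h A hA hAc => ?_, fun h A _ => h A⟩
  by_cases hvA : v ∈ A
  · rw [← cutEdges_compl]
    exact h Aᶜ (by simpa using hvA) hAc (by rwa [compl_compl])
  · exact h A hvA hA hAc

end

/-- For a finite simple 4-regular graph `Γ` with at least 3 vertices and any vertex `v`,
the vertex-deleted graph `Γ − v` is primitive iff `Γ` is completed primitive. -/
theorem primitive_iff_completedPrimitive {V : Type*} [Fintype V] (G : SimpleGraph V)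
    (hreg : ∀ v : V, G.degree v = 4) (hcard : 3 ≤ Fintype.card V) (v : V) :
    IsPrimitive (G.induce (({v} : Set V)ᶜ)) ↔ CompletedPrimitive G := by
  rw [isPrimitive_iff_isProperlySparse (card_edgeFinset_induce_compl_singleton_add_two hreg v),
    isProperlySparse_induce_compl_singleton_iff_forall_four_lt_card_cutEdges hreg]
  refine ⟨fun hcut => ⟨hreg, { preconnected := ?_, nonempty := ⟨v⟩ }, hcard, hcut⟩,
    fun hG => hG.2.2.2⟩
  exact preconnected_of_cutEdges_nonempty
    (fun x => (G.degree_pos_iff_exists_adj x).1 (by rw [hreg]; norm_num))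
    fun A hA hAc => Finset.card_pos.1 (pos_of_gt (hcut A hA hAc))
end

section
/- Let Γ₁ and Γ₂ be completed primitive simple graphs on disjoint vertex sets, let (a₁,b₁,c₁) be a triangle of Γ₁ (three mutually adjacent vertices) and (a₂,b₂,c₂) a triangle of Γ₂. Let Γ be the graph obtained from the disjoint union Γ₁ ⊔ Γ₂ by identifying a₁ with a₂, b₁ with b₂ and c₁ with c₂, and then deleting the three triangle edges ab, bc, ca (which occur in both Γ₁ and Γ₂). Then Γ is a completed primitive 4-regular graph, and Γ is reducible: its vertex-connectivity is exactly 3, since removing the three identified vertices a, b, c disconnects it. -/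
open scoped Classical

/-- `x` is one of the three triangle vertices `a`, `b`, `c`. -/
def InTriangle {W : Type*} (a b c x : W) : Prop := x = a ∨ x = b ∨ x = c

/-- The vertex set of the gluing of two graphs along triangles `(a₁,b₁,c₁)` and
`(a₂,b₂,c₂)`: all vertices of `W₁`, and the vertices of `W₂` other than the triangle
vertices (which get identified with `a₁`, `b₁`, `c₁`). -/
def GluedVert (W₁ W₂ : Type*) (a₂ b₂ c₂ : W₂) : Type _ :=
  W₁ ⊕ {z : W₂ // ¬ InTriangle a₂ b₂ c₂ z}

noncomputable instance {W₁ W₂ : Type*} [Fintype W₁] [Fintype W₂] (a₂ b₂ c₂ : W₂) :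
    Fintype (GluedVert W₁ W₂ a₂ b₂ c₂) := by
  unfold GluedVert; infer_instance

/-- The gluing of `G₁` and `G₂` along the triangles `(a₁,b₁,c₁)` and `(a₂,b₂,c₂)`
(identifying `a₁ ~ a₂`, `b₁ ~ b₂`, `c₁ ~ c₂`), with the three triangle edges deleted. -/
def glueOnTriangles {W₁ W₂ : Type*} (G₁ : SimpleGraph W₁) (G₂ : SimpleGraph W₂)
    (a₁ b₁ c₁ : W₁) (a₂ b₂ c₂ : W₂) : SimpleGraph (GluedVert W₁ W₂ a₂ b₂ c₂) :=
  SimpleGraph.fromRel (fun u v =>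
    match u, v with
    | Sum.inl x, Sum.inl y =>
        G₁.Adj x y ∧ ¬ (InTriangle a₁ b₁ c₁ x ∧ InTriangle a₁ b₁ c₁ y)
    | Sum.inl x, Sum.inr y =>
        (x = a₁ ∧ G₂.Adj a₂ y.1) ∨ (x = b₁ ∧ G₂.Adj b₂ y.1) ∨ (x = c₁ ∧ G₂.Adj c₂ y.1)
    | Sum.inr _, Sum.inl _ => False
    | Sum.inr y, Sum.inr z => G₂.Adj y.1 z.1)

/-!
With both graphs placed on the glued vertex set, they overlap in a triangle `T` on which both are
complete, so the gluing is their symmetric difference. The cut of a vertex set `A` in a symmetric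
difference is the symmetric difference of the two cuts, whence it has
`#cut₁ + #cut₂ - 2 * k * (3 - k)` edges, where `k = #(T ∩ A)`. After replacing `A` by its
complement, `k ≤ 1`. For `k = 0` nothing is subtracted, and either a single cut is already larger
than `4` or both have at least `4` edges; for `k = 1` both cuts have at least `4` edges and one has
more, so at least `9 - 4` edges remain.

The absence of small cuts makes the gluing 3-connected by counting the edges that a separating set
of at most two vertices can receive, and `T` separates the two graphs from each other.
-/

open Finset
open scoped symmDiff

section CutPairs

variable {V W : Type*} [Fintype V] [Fintype W]

/-- The edge cut of `A`, each edge being recorded as the ordered pair `(x, y)` with `x ∈ A` and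
`y ∉ A`. Unlike the unordered `cutEdges`, it is a subset of `A ×ˢ Aᶜ`. -/
noncomputable def cutPairs (G : SimpleGraph V) (A : Finset V) : Finset (V × V) :=
  G.interedges A Aᶜ

variable {G : SimpleGraph V} {A : Finset V} {x y : V}

lemma mk_mem_cutPairs : (x, y) ∈ cutPairs G A ↔ x ∈ A ∧ y ∉ A ∧ G.Adj x y := by
  rw [cutPairs, SimpleGraph.mk_mem_interedges_iff, mem_compl]

variable (G A)

lemma card_cutEdges : #(cutEdges G A) = #(cutPairs G A) := by
  refine (card_bij (fun p _ ↦ s(p.1, p.2)) ?_ ?_ ?_).symm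
  · rintro ⟨x, y⟩ hxy
    obtain ⟨hx, hy, hadj⟩ := mk_mem_cutPairs.1 hxy
    simp only [cutEdges, mem_filter, SimpleGraph.mem_edgeFinset, SimpleGraph.mem_edgeSet]
    exact ⟨hadj, x, Sym2.mem_mk_left x y, hx, y, Sym2.mem_mk_right x y, hy⟩
  · rintro ⟨x, y⟩ hxy ⟨x', y'⟩ hxy' heq
    rcases Sym2.eq_iff.1 heq with ⟨rfl, rfl⟩ | ⟨rfl, rfl⟩
    · rfl
    · exact absurd (mk_mem_cutPairs.1 hxy).1 (mk_mem_cutPairs.1 hxy').2.1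
  · intro e he
    simp only [cutEdges, mem_filter, SimpleGraph.mem_edgeFinset] at he
    obtain ⟨hadj, x, hxe, hx, y, hye, hy⟩ := he
    obtain rfl := (Sym2.mem_and_mem_iff (ne_of_mem_of_not_mem hx hy)).1 ⟨hxe, hye⟩
    exact ⟨(x, y), mk_mem_cutPairs.2 ⟨hx, hy, hadj⟩, rfl⟩

lemma card_cutPairs_compl : #(cutPairs G Aᶜ) = #(cutPairs G A) := by
  have := G.symm
  rw [cutPairs, compl_compl]
  exact Rel.card_interedges_comm _ _

lemma card_interedges_univ_right : #(G.interedges A univ) = ∑ v ∈ A, G.degree v := by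
  rw [SimpleGraph.interedges, Rel.interedges, card_filter, sum_product]
  simp [← SimpleGraph.card_neighborFinset_eq_degree,
    SimpleGraph.neighborFinset_eq_filter]

lemma card_cutPairs_singleton (v : V) : #(cutPairs G {v}) = G.degree v := by
  have hloop : cutPairs G {v} = G.interedges {v} univ := by
    ext ⟨x, y⟩
    simp only [mk_mem_cutPairs, SimpleGraph.mk_mem_interedges_iff, mem_singleton, mem_univ,
      true_and, and_congr_right_iff, and_iff_right_iff_imp]
    rintro rfl hadj
    exact hadj.ne'
  rw [hloop, card_interedges_univ_right, sum_singleton]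

variable {G} in
lemma cutPairs_inter_of_support_subset {R : Finset V} (hR : G.support ⊆ R) :
    cutPairs G (R ∩ A) = cutPairs G A := by
  ext ⟨x, y⟩
  simp only [mk_mem_cutPairs, mem_inter]
  constructor
  · rintro ⟨hx, hy, hadj⟩
    exact ⟨hx.2, fun hyA ↦ hy ⟨hR ⟨x, hadj.symm⟩, hyA⟩, hadj⟩
  · rintro ⟨hx, hy, hadj⟩
    exact ⟨⟨hR ⟨y, hadj⟩, hx⟩, fun h ↦ hy h.2, hadj⟩

lemma card_cutPairs_map (G : SimpleGraph W) (f : W ↪ V) :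
    #(cutPairs (G.map f) A) = #(cutPairs G (A.preimage f f.injective.injOn)) := by
  rw [← card_map (f.prodMap f)]
  congr 1
  ext ⟨u, v⟩
  simp only [mk_mem_cutPairs, SimpleGraph.map_adj, mem_map, Prod.exists, mem_preimage,
    Function.Embedding.coe_prodMap, Prod.map_apply, Prod.mk.injEq]
  constructor
  · rintro ⟨hu, hv, x, y, hadj, rfl, rfl⟩
    exact ⟨x, y, ⟨hu, hv, hadj⟩, rfl, rfl⟩
  · rintro ⟨x, y, ⟨hx, hy, hadj⟩, rfl, rfl⟩
    exact ⟨hx, hy, x, y, hadj, rfl, rfl⟩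

end CutPairs

section SymmDiff

variable {V : Type*}

lemma card_symmDiff_add_two_mul_card_inter [DecidableEq V] (s t : Finset V) :
    #(s ∆ t) + 2 * #(s ∩ t) = #s + #t := by
  have hdisj : Disjoint (s \ t) (t \ s) := disjoint_sdiff_sdiff
  rw [symmDiff_def, sup_eq_union, card_union_of_disjoint hdisj, ← card_sdiff_add_card_inter s t,
    ← card_sdiff_add_card_inter t s, inter_comm t s]
  ring

lemma card_inter_add_card_inter [DecidableEq V] (R₁ R₂ A : Finset V) :
    #(R₁ ∩ A) + #(R₂ ∩ A) = #((R₁ ∪ R₂) ∩ A) + #(R₁ ∩ R₂ ∩ A) := by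
  rw [union_inter_distrib_right, inter_inter_distrib_right, card_union_add_card_inter]

variable [Fintype V] {H₁ H₂ : SimpleGraph V} {R₁ R₂ : Finset V}

lemma cutPairs_symmDiff (H₁ H₂ : SimpleGraph V) (A : Finset V) :
    cutPairs (H₁ ∆ H₂) A = cutPairs H₁ A ∆ cutPairs H₂ A := by
  ext ⟨x, y⟩
  rw [mem_symmDiff]
  simp only [mk_mem_cutPairs, symmDiff_def, SimpleGraph.sup_adj, SimpleGraph.sdiff_adj]
  tauto

lemma cutPairs_inter_cutPairs (hR₁ : H₁.support ⊆ R₁) (hR₂ : H₂.support ⊆ R₂)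
    (hK₁ : H₁.IsClique ↑(R₁ ∩ R₂)) (hK₂ : H₂.IsClique ↑(R₁ ∩ R₂)) (A : Finset V) :
    cutPairs H₁ A ∩ cutPairs H₂ A = (R₁ ∩ R₂ ∩ A) ×ˢ ((R₁ ∩ R₂) \ A) := by
  ext ⟨x, y⟩
  simp only [mem_inter, mk_mem_cutPairs, mem_product, mem_sdiff]
  constructor
  · rintro ⟨⟨hx, hy, hadj₁⟩, -, -, hadj₂⟩
    exact ⟨⟨⟨hR₁ ⟨y, hadj₁⟩, hR₂ ⟨y, hadj₂⟩⟩, hx⟩,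
      ⟨hR₁ ⟨x, hadj₁.symm⟩, hR₂ ⟨x, hadj₂.symm⟩⟩, hy⟩
  · rintro ⟨⟨hxR, hx⟩, hyR, hy⟩
    have hne : x ≠ y := ne_of_mem_of_not_mem hx hy
    have hxT : x ∈ (↑(R₁ ∩ R₂) : Set V) := mem_coe.2 (mem_inter.2 hxR)
    have hyT : y ∈ (↑(R₁ ∩ R₂) : Set V) := mem_coe.2 (mem_inter.2 hyR)
    exact ⟨⟨hx, hy, hK₁ hxT hyT hne⟩, hx, hy, hK₂ hxT hyT hne⟩

lemma card_cutPairs_symmDiff (hR₁ : H₁.support ⊆ R₁) (hR₂ : H₂.support ⊆ R₂)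
    (hK₁ : H₁.IsClique ↑(R₁ ∩ R₂)) (hK₂ : H₂.IsClique ↑(R₁ ∩ R₂)) (A : Finset V) :
    #(cutPairs (H₁ ∆ H₂) A) + 2 * (#(R₁ ∩ R₂ ∩ A) * #((R₁ ∩ R₂) \ A)) =
      #(cutPairs H₁ A) + #(cutPairs H₂ A) := by
  rw [cutPairs_symmDiff, ← card_product, ← cutPairs_inter_cutPairs hR₁ hR₂ hK₁ hK₂,
    card_symmDiff_add_two_mul_card_inter]

end SymmDiff

section Separation

variable {V : Type*} {G : SimpleGraph V} {S X : Set V}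

/-- The vertex set `S` separates `X` from the remaining vertices of `G`, of which there is at least
one. -/
structure IsSeparation (G : SimpleGraph V) (S X : Set V) : Prop where
  nonempty : X.Nonempty
  disjoint : Disjoint X S
  nonempty_rest : (X ∪ S)ᶜ.Nonempty
  mem_of_adj : ∀ ⦃x⦄, x ∈ X → ∀ ⦃y⦄, G.Adj x y → y ∈ X ∪ S

lemma IsSeparation.rest (h : IsSeparation G S X) : IsSeparation G S (X ∪ S)ᶜ where
  nonempty := h.nonempty_rest
  disjoint := Set.disjoint_compl_left_iff_subset.2 Set.subset_union_right
  nonempty_rest := by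
    obtain ⟨x, hx⟩ := h.nonempty
    exact ⟨x, by simp [hx, h.disjoint.notMem_of_mem_left hx]⟩
  mem_of_adj := by
    intro y hy z hyz
    by_contra hz
    have hzX : z ∈ X := by simp only [Set.mem_union, Set.mem_compl_iff] at hz; tauto
    exact hy (h.mem_of_adj hzX hyz.symm)

lemma preconnected_induce_compl_iff :
    (G.induce Sᶜ).Preconnected ↔ ∀ X, ¬ IsSeparation G S X := by
  constructor
  · intro hG X hX
    obtain ⟨x, hx⟩ := hX.nonempty
    obtain ⟨y, hy⟩ := hX.nonempty_rest
    have hxS : x ∈ Sᶜ := hX.disjoint.notMem_of_mem_left hx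
    have hyS : y ∈ Sᶜ := fun h ↦ hy (Or.inr h)
    obtain ⟨p⟩ := hG ⟨x, hxS⟩ ⟨y, hyS⟩
    obtain ⟨d, -, hfst, hsnd⟩ :=
      p.exists_boundary_dart (Subtype.val ⁻¹' X) hx (fun h ↦ hy (Or.inl h))
    exact (hX.mem_of_adj hfst d.adj).elim hsnd d.snd.2
  · intro hG u v
    by_contra huv
    refine hG {w | ∃ hw : w ∈ Sᶜ, (G.induce Sᶜ).Reachable u ⟨w, hw⟩}
      ⟨⟨u, u.2, .rfl⟩, ?_, ⟨v, ?_⟩, ?_⟩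
    · exact Set.disjoint_left.2 fun w hw ↦ hw.1
    · rintro (⟨_, hreach⟩ | hvS)
      · exact huv hreach
      · exact v.2 hvS
    · rintro x ⟨hx, hux⟩ y hxy
      by_cases hy : y ∈ S
      · exact Or.inr hy
      · have hxy' : (G.induce Sᶜ).Adj ⟨x, hx⟩ ⟨y, hy⟩ := hxy
        exact Or.inl ⟨hy, hux.trans hxy'.reachable⟩

lemma isSeparation_of_le_sup {H₁ H₂ : SimpleGraph V} {R₁ R₂ : Set V} (hG : G ≤ H₁ ⊔ H₂)
    (hR₁ : H₁.support ⊆ R₁) (hR₂ : H₂.support ⊆ R₂) (h₁₂ : (R₁ \ R₂).Nonempty)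
    (h₂₁ : (R₂ \ R₁).Nonempty) : IsSeparation G (R₁ ∩ R₂) (R₁ \ R₂) where
  nonempty := h₁₂
  disjoint := Set.disjoint_sdiff_inter
  nonempty_rest := h₂₁.mono (by grind)
  mem_of_adj := by
    rintro x ⟨-, hx⟩ y hxy
    rcases hG hxy with hadj | hadj
    · have hy : y ∈ R₁ := hR₁ ⟨x, hadj.symm⟩
      grind
    · exact absurd (hR₂ ⟨y, hadj⟩) hx

end Separation

section Connectivity

variable {V : Type*} [Fintype V] {G : SimpleGraph V} {S X : Finset V}

lemma IsSeparation.degree_lt_card_add_card (h : IsSeparation G ↑S ↑X) {x : V} (hx : x ∈ X) :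
    G.degree x < #X + #S := by
  have hsub : insert x (G.neighborFinset x) ⊆ X ∪ S :=
    insert_subset (mem_union_left S hx) fun y hy ↦ by
      simpa using h.mem_of_adj hx ((G.mem_neighborFinset x y).1 hy)
  calc G.degree x < #(insert x (G.neighborFinset x)) := by
        rw [card_insert_of_notMem (by simp), G.card_neighborFinset_eq_degree]
        exact Nat.lt_succ_self _
    _ ≤ #(X ∪ S) := card_le_card hsub
    _ ≤ #X + #S := card_union_le X S

lemma IsSeparation.cutPairs_subset (h : IsSeparation G ↑S ↑X) :
    cutPairs G X ⊆ G.interedges X S := by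
  rintro ⟨x, y⟩ hxy
  obtain ⟨hx, hy, hadj⟩ := mk_mem_cutPairs.1 hxy
  exact G.mk_mem_interedges_iff.2 ⟨hx, (h.mem_of_adj hx hadj).resolve_left hy, hadj⟩

lemma IsSeparation.finset_rest (h : IsSeparation G ↑S ↑X) : IsSeparation G ↑S ↑(X ∪ S)ᶜ := by
  simpa using h.rest

lemma IsSeparation.card_cutPairs_add_card_cutPairs_le (h : IsSeparation G ↑S ↑X) :
    #(cutPairs G X) + #(cutPairs G (X ∪ S)ᶜ) ≤ ∑ v ∈ S, G.degree v := by
  have := G.symm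
  have hdisj : Disjoint X (X ∪ S)ᶜ := disjoint_compl_right.mono_left subset_union_left
  calc #(cutPairs G X) + #(cutPairs G (X ∪ S)ᶜ)
      ≤ #(G.interedges X S) + #(G.interedges (X ∪ S)ᶜ S) :=
        add_le_add (card_le_card h.cutPairs_subset) (card_le_card h.finset_rest.cutPairs_subset)
    _ = #(G.interedges X S ∪ G.interedges (X ∪ S)ᶜ S) :=
        (card_union_of_disjoint (G.interedges_disjoint_left hdisj S)).symm
    _ ≤ #(G.interedges univ S) :=
        card_le_card (union_subset (G.interedges_mono (subset_univ _) subset_rfl)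
          (G.interedges_mono (subset_univ _) subset_rfl))
    _ = #(G.interedges S univ) := Rel.card_interedges_comm _ _
    _ = ∑ v ∈ S, G.degree v := card_interedges_univ_right G S

-- Both sides of a separation by at most two vertices have at least two vertices, so each sends more
-- than `d` edges into `S`, which meets at most `2 * d`.
lemma not_isSeparation_of_card_le_two {d : ℕ} (hd : 3 ≤ d) (hdeg : ∀ v, G.degree v = d)
    (hcut : ∀ A : Finset V, 2 ≤ #A → 2 ≤ #Aᶜ → d < #(cutPairs G A)) (hS : #S ≤ 2) :
    ¬ IsSeparation G ↑S ↑X := by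
  intro h
  have two_le_card : ∀ {Y : Finset V}, IsSeparation G ↑S ↑Y → 2 ≤ #Y := fun {Y} hY ↦ by
    obtain ⟨y, hy⟩ := hY.nonempty
    have hlt := hY.degree_lt_card_add_card hy
    rw [hdeg y] at hlt
    omega
  have hX := two_le_card h
  have hY := two_le_card h.finset_rest
  have hXY : X ⊆ (X ∪ S)ᶜᶜ := by rw [compl_compl]; exact subset_union_left
  have hcutX := hcut X hX (hY.trans (card_le_card (subset_compl_comm.1 hXY)))
  have hcutY := hcut (X ∪ S)ᶜ hY (hX.trans (card_le_card hXY))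
  have hle : #(cutPairs G X) + #(cutPairs G (X ∪ S)ᶜ) ≤ 2 * d :=
    calc _ ≤ ∑ v ∈ S, G.degree v := h.card_cutPairs_add_card_cutPairs_le
      _ = #S * d := by simp [hdeg]
      _ ≤ 2 * d := Nat.mul_le_mul_right d hS
  omega

lemma connected_induce_compl_of_card_le_two [Nonempty V] {d : ℕ} (hd : 3 ≤ d)
    (hdeg : ∀ v, G.degree v = d)
    (hcut : ∀ A : Finset V, 2 ≤ #A → 2 ≤ #Aᶜ → d < #(cutPairs G A)) (hS : #S ≤ 2) :
    (G.induce (↑S : Set V)ᶜ).Connected := by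
  have hpre : (G.induce (↑S : Set V)ᶜ).Preconnected := preconnected_induce_compl_iff.2 fun X ↦ by
    lift X to Finset V using X.toFinite
    exact not_isSeparation_of_card_le_two hd hdeg hcut hS
  obtain ⟨v⟩ := ‹Nonempty V›
  have hcard := G.degree_lt_card_verts v
  rw [hdeg v] at hcard
  obtain ⟨w, hw⟩ : Sᶜ.Nonempty := by
    rw [← card_pos, card_compl]
    omega
  have : Nonempty ↥(↑S : Set V)ᶜ := ⟨w, by simpa using hw⟩
  exact ⟨hpre⟩

end Connectivity

section IsPrimitiveOn

variable {V W : Type*} [Fintype V]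

/-- Completed primitivity, connectedness aside, of a graph with vertex set `R ⊆ V`. Such a graph is
encoded as a graph on `V` without edges outside `R`, so that the two graphs to be glued live on
the same type. -/
structure IsPrimitiveOn (H : SimpleGraph V) (R : Finset V) : Prop where
  support_subset : H.support ⊆ R
  degree_eq : ∀ v ∈ R, H.degree v = 4
  four_lt_card_cutPairs : ∀ A : Finset V, 2 ≤ #(R ∩ A) → 2 ≤ #(R \ A) → 4 < #(cutPairs H A)

namespace IsPrimitiveOn

variable {H : SimpleGraph V} {R A : Finset V}

lemma card_cutPairs_eq_zero (h : IsPrimitiveOn H R) (hA : #(R ∩ A) = 0) : #(cutPairs H A) = 0 := by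
  rw [← cutPairs_inter_of_support_subset A h.support_subset, card_eq_zero.1 hA]
  simp [cutPairs, SimpleGraph.interedges, Rel.interedges]

lemma card_cutPairs_eq_four (h : IsPrimitiveOn H R) (hA : #(R ∩ A) = 1) :
    #(cutPairs H A) = 4 := by
  obtain ⟨v, hv⟩ := card_eq_one.1 hA
  have hvR : v ∈ R := mem_of_mem_inter_left (hv ▸ mem_singleton_self v)
  rw [← cutPairs_inter_of_support_subset A h.support_subset, hv, card_cutPairs_singleton,
    h.degree_eq v hvR]

lemma four_lt_card (h : IsPrimitiveOn H R) (hR : R.Nonempty) : 4 < #R := by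
  obtain ⟨v, hv⟩ := hR
  have hsub : insert v (H.neighborFinset v) ⊆ R :=
    insert_subset hv fun w hw ↦ h.support_subset ⟨v, ((H.mem_neighborFinset v w).1 hw).symm⟩
  calc 4 < #(insert v (H.neighborFinset v)) := by
        rw [card_insert_of_notMem (by simp), H.card_neighborFinset_eq_degree, h.degree_eq v hv]
        norm_num
    _ ≤ #R := card_le_card hsub

lemma connected_induce_compl [Nonempty V] (h : IsPrimitiveOn H univ) {S : Finset V}
    (hS : #S ≤ 2) : (H.induce (↑S : Set V)ᶜ).Connected := by
  refine connected_induce_compl_of_card_le_two (by norm_num : 3 ≤ 4)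
    (fun v ↦ h.degree_eq v (mem_univ v)) (fun A hA hA' ↦ ?_) hS
  exact h.four_lt_card_cutPairs A (by rwa [univ_inter]) (by rwa [← compl_eq_univ_sdiff])

lemma completedPrimitive [Nonempty V] (h : IsPrimitiveOn H univ) : CompletedPrimitive H := by
  refine ⟨fun v ↦ h.degree_eq v (mem_univ v), ?_, ?_, fun A hA hA' ↦ ?_⟩
  · have hconn := h.connected_induce_compl (S := ∅) (by simp)
    rw [coe_empty, Set.compl_empty] at hconn
    exact (SimpleGraph.induceUnivIso H).connected_iff.1 hconn
  · have hcard := h.four_lt_card univ_nonempty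
    rw [card_univ] at hcard
    omega
  · rw [card_cutEdges]
    exact h.four_lt_card_cutPairs A (by rwa [univ_inter]) (by rwa [← compl_eq_univ_sdiff])

end IsPrimitiveOn

lemma CompletedPrimitive.isPrimitiveOn_map [Fintype W] {G : SimpleGraph W}
    (h : CompletedPrimitive G) (f : W ↪ V) : IsPrimitiveOn (G.map f) (univ.map f) where
  support_subset := by
    rintro _ ⟨_, -, x, -, -, rfl, -⟩
    simp
  degree_eq := by
    simp only [mem_map, mem_univ, true_and, forall_exists_index, forall_apply_eq_imp_iff]
    intro x
    rw [← h.1 x, ← card_cutPairs_singleton, card_cutPairs_map, ← card_cutPairs_singleton]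
    congr
    ext y
    simp
  four_lt_card_cutPairs A hA hA' := by
    have hin : (A.preimage f f.injective.injOn).map f = univ.map f ∩ A := by
      ext v
      simp only [mem_map, mem_preimage, mem_inter, mem_univ, true_and]
      grind
    have hout : (A.preimage f f.injective.injOn)ᶜ.map f = univ.map f \ A := by
      ext v
      simp only [mem_map, mem_compl, mem_preimage, mem_sdiff, mem_univ, true_and]
      grind
    rw [← hin, card_map] at hA
    rw [← hout, card_map] at hA'
    rw [card_cutPairs_map, ← card_cutEdges]
    exact h.2.2.2 _ hA hA'

namespace IsPrimitiveOn

variable {H₁ H₂ : SimpleGraph V} {R₁ R₂ : Finset V}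

lemma degree_symmDiff (h₁ : IsPrimitiveOn H₁ R₁) (h₂ : IsPrimitiveOn H₂ R₂)
    (hcard : #(R₁ ∩ R₂) = 3) (hK₁ : H₁.IsClique ↑(R₁ ∩ R₂)) (hK₂ : H₂.IsClique ↑(R₁ ∩ R₂)) {v : V}
    (hv : v ∈ R₁ ∪ R₂) : (H₁ ∆ H₂).degree v = 4 := by
  have hcut := card_cutPairs_symmDiff h₁.support_subset h₂.support_subset hK₁ hK₂ {v}
  rw [card_cutPairs_singleton] at hcut
  have hsplit := card_inter_add_card_sdiff (R₁ ∩ R₂) {v}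
  rw [hcard] at hsplit
  by_cases hv₁ : v ∈ R₁ <;> by_cases hv₂ : v ∈ R₂
  · have hT : #(R₁ ∩ R₂ ∩ {v}) = 1 := by simp [hv₁, hv₂]
    rw [hT, one_mul, h₁.card_cutPairs_eq_four (by simp [hv₁]),
      h₂.card_cutPairs_eq_four (by simp [hv₂])] at hcut
    omega
  · have hT : #(R₁ ∩ R₂ ∩ {v}) = 0 := by simp [hv₂]
    rwa [hT, zero_mul, h₁.card_cutPairs_eq_four (by simp [hv₁]),
      h₂.card_cutPairs_eq_zero (by simp [hv₂])] at hcut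
  · have hT : #(R₁ ∩ R₂ ∩ {v}) = 0 := by simp [hv₁]
    rwa [hT, zero_mul, h₁.card_cutPairs_eq_zero (by simp [hv₁]),
      h₂.card_cutPairs_eq_four (by simp [hv₂])] at hcut
  · exact absurd hv (by simp [hv₁, hv₂])

lemma four_lt_card_cutPairs_symmDiff (h₁ : IsPrimitiveOn H₁ R₁) (h₂ : IsPrimitiveOn H₂ R₂)
    (hcard : #(R₁ ∩ R₂) = 3) (hK₁ : H₁.IsClique ↑(R₁ ∩ R₂)) (hK₂ : H₂.IsClique ↑(R₁ ∩ R₂))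
    {A : Finset V} (hA : 2 ≤ #((R₁ ∪ R₂) ∩ A)) (hT : #(R₁ ∩ R₂ ∩ A) ≤ 1) :
    4 < #(cutPairs (H₁ ∆ H₂) A) := by
  have hcut := card_cutPairs_symmDiff h₁.support_subset h₂.support_subset hK₁ hK₂ A
  have hsplit := card_inter_add_card_sdiff (R₁ ∩ R₂) A
  rw [hcard] at hsplit
  have hsum := card_inter_add_card_inter R₁ R₂ A
  have hout : 2 ≤ #((R₁ ∩ R₂) \ A) := by omega
  have hout₁ : 2 ≤ #(R₁ \ A) :=
    hout.trans (card_le_card (sdiff_subset_sdiff inter_subset_left Subset.rfl))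
  have hout₂ : 2 ≤ #(R₂ \ A) :=
    hout.trans (card_le_card (sdiff_subset_sdiff inter_subset_right Subset.rfl))
  have four₁ := h₁.card_cutPairs_eq_four (A := A)
  have four₂ := h₂.card_cutPairs_eq_four (A := A)
  have lt₁ := fun hin ↦ h₁.four_lt_card_cutPairs A hin hout₁
  have lt₂ := fun hin ↦ h₂.four_lt_card_cutPairs A hin hout₂
  obtain hk | hk : #(R₁ ∩ R₂ ∩ A) = 0 ∨ #(R₁ ∩ R₂ ∩ A) = 1 := by omega
  · rw [hk, zero_mul] at hcut
    omega
  · have hT₁ : 1 ≤ #(R₁ ∩ A) :=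
      hk.ge.trans (card_le_card (inter_subset_inter_right inter_subset_left))
    have hT₂ : 1 ≤ #(R₂ ∩ A) :=
      hk.ge.trans (card_le_card (inter_subset_inter_right inter_subset_right))
    rw [hk, one_mul] at hcut
    omega

theorem symmDiff (h₁ : IsPrimitiveOn H₁ R₁) (h₂ : IsPrimitiveOn H₂ R₂) (hcard : #(R₁ ∩ R₂) = 3)
    (hK₁ : H₁.IsClique ↑(R₁ ∩ R₂)) (hK₂ : H₂.IsClique ↑(R₁ ∩ R₂)) :
    IsPrimitiveOn (H₁ ∆ H₂) (R₁ ∪ R₂) where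
  support_subset := by
    rintro v ⟨w, hvw⟩
    rw [mem_coe, mem_union]
    exact (symmDiff_le_sup (a := H₁) (b := H₂) hvw).imp (fun h ↦ h₁.support_subset ⟨w, h⟩)
      fun h ↦ h₂.support_subset ⟨w, h⟩
  degree_eq v hv := h₁.degree_symmDiff h₂ hcard hK₁ hK₂ hv
  four_lt_card_cutPairs A hA hA' := by
    have hsplit := card_inter_add_card_sdiff (R₁ ∩ R₂) A
    rcases le_or_gt #(R₁ ∩ R₂ ∩ A) 1 with hT | hT
    · exact h₁.four_lt_card_cutPairs_symmDiff h₂ hcard hK₁ hK₂ hA hT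
    · rw [sdiff_eq_inter_compl] at hA' hsplit
      rw [← card_cutPairs_compl]
      exact h₁.four_lt_card_cutPairs_symmDiff h₂ hcard hK₁ hK₂ hA' (by omega)

lemma not_preconnected_induce_compl_inter (h₁ : IsPrimitiveOn H₁ R₁) (h₂ : IsPrimitiveOn H₂ R₂)
    (hcard : #(R₁ ∩ R₂) = 3) :
    ¬ ((H₁ ∆ H₂).induce (↑(R₁ ∩ R₂) : Set V)ᶜ).Preconnected := by
  have hne : (R₁ ∩ R₂).Nonempty := card_pos.1 (by omega)
  have h₁₂ : (R₁ \ R₂).Nonempty := by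
    have hlt := h₁.four_lt_card (hne.mono inter_subset_left)
    have hsplit := card_inter_add_card_sdiff R₁ R₂
    exact card_pos.1 (by omega)
  have h₂₁ : (R₂ \ R₁).Nonempty := by
    have hlt := h₂.four_lt_card (hne.mono inter_subset_right)
    have hsplit := card_inter_add_card_sdiff R₂ R₁
    rw [inter_comm] at hsplit
    exact card_pos.1 (by omega)
  intro hpre
  rw [coe_inter] at hpre
  exact preconnected_induce_compl_iff.1 hpre _ (isSeparation_of_le_sup symmDiff_le_sup
    h₁.support_subset h₂.support_subset (by exact_mod_cast h₁₂) (by exact_mod_cast h₂₁))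

end IsPrimitiveOn

end IsPrimitiveOn

section Gluing

variable {W₁ W₂ : Type*} {G₁ : SimpleGraph W₁} {G₂ : SimpleGraph W₂}
  {a₁ b₁ c₁ x y : W₁} {a₂ b₂ c₂ z : W₂} {w w' : {z : W₂ // ¬ InTriangle a₂ b₂ c₂ z}}

namespace GluedVert

/-- The vertices of the first graph, as vertices of the gluing. -/
def inl : W₁ ↪ GluedVert W₁ W₂ a₂ b₂ c₂ := Function.Embedding.inl

/-- The vertices of the second graph outside the triangle, as vertices of the gluing. -/
def inr : {z : W₂ // ¬ InTriangle a₂ b₂ c₂ z} ↪ GluedVert W₁ W₂ a₂ b₂ c₂ := Function.Embedding.inr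

lemma inl_ne_inr : (inl x : GluedVert W₁ W₂ a₂ b₂ c₂) ≠ inr w := Sum.inl_ne_inr

lemma eq_inl_or_eq_inr (v : GluedVert W₁ W₂ a₂ b₂ c₂) : (∃ x, v = inl x) ∨ ∃ w, v = inr w := by
  rcases v with x | w
  · exact Or.inl ⟨x, rfl⟩
  · exact Or.inr ⟨w, rfl⟩

/-- The vertices of the second graph, as vertices of the gluing: `a₂`, `b₂`, `c₂` are identified
with `a₁`, `b₁`, `c₁`. -/
noncomputable def ofRight (a₁ b₁ c₁ : W₁) (a₂ b₂ c₂ z : W₂) : GluedVert W₁ W₂ a₂ b₂ c₂ :=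
  if hz : InTriangle a₂ b₂ c₂ z then inl (if z = a₂ then a₁ else if z = b₂ then b₁ else c₁)
  else inr ⟨z, hz⟩

lemma ofRight_eq_inl_iff (h₂ : [a₂, b₂, c₂].Nodup) : ofRight a₁ b₁ c₁ a₂ b₂ c₂ z = inl x ↔
    (x = a₁ ∧ z = a₂) ∨ (x = b₁ ∧ z = b₂) ∨ (x = c₁ ∧ z = c₂) := by
  by_cases hz : InTriangle a₂ b₂ c₂ z
  · rw [ofRight, dif_pos hz, inl.apply_eq_iff_eq]
    simp only [List.nodup_cons, List.mem_cons, List.not_mem_nil] at h₂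
    rcases hz with rfl | rfl | rfl <;> grind
  · rw [ofRight, dif_neg hz]
    refine iff_of_false inl_ne_inr.symm fun h ↦ hz ?_
    exact h.imp And.right (Or.imp And.right And.right)

lemma ofRight_eq_inr_iff : ofRight a₁ b₁ c₁ a₂ b₂ c₂ z = inr w ↔ z = w := by
  by_cases hz : InTriangle a₂ b₂ c₂ z
  · rw [ofRight, dif_pos hz]
    exact iff_of_false inl_ne_inr fun h ↦ w.2 (h ▸ hz)
  · rw [ofRight, dif_neg hz, inr.apply_eq_iff_eq, Subtype.ext_iff]

lemma ofRight_injective (h₁ : [a₁, b₁, c₁].Nodup) (h₂ : [a₂, b₂, c₂].Nodup) :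
    Function.Injective (ofRight a₁ b₁ c₁ a₂ b₂ c₂) := by
  intro z z' hzz'
  rcases (ofRight a₁ b₁ c₁ a₂ b₂ c₂ z).eq_inl_or_eq_inr with ⟨x, hz⟩ | ⟨w, hz⟩
  · have hz' := hzz'.symm.trans hz
    rw [ofRight_eq_inl_iff h₂] at hz hz'
    simp only [List.nodup_cons, List.mem_cons, List.not_mem_nil] at h₁
    grind
  · have hz' := hzz'.symm.trans hz
    rw [ofRight_eq_inr_iff] at hz hz'
    rw [hz, hz']

/-- `GluedVert.ofRight` as an embedding. -/
noncomputable def right (h₁ : [a₁, b₁, c₁].Nodup) (h₂ : [a₂, b₂, c₂].Nodup) :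
    W₂ ↪ GluedVert W₁ W₂ a₂ b₂ c₂ :=
  ⟨ofRight a₁ b₁ c₁ a₂ b₂ c₂, ofRight_injective h₁ h₂⟩

lemma right_eq_inl_iff (h₁ : [a₁, b₁, c₁].Nodup) (h₂ : [a₂, b₂, c₂].Nodup) :
    right h₁ h₂ z = inl x ↔ (x = a₁ ∧ z = a₂) ∨ (x = b₁ ∧ z = b₂) ∨ (x = c₁ ∧ z = c₂) :=
  ofRight_eq_inl_iff h₂

lemma right_eq_inr_iff (h₁ : [a₁, b₁, c₁].Nodup) (h₂ : [a₂, b₂, c₂].Nodup) :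
    right h₁ h₂ z = inr w ↔ z = w :=
  ofRight_eq_inr_iff

lemma map_inl_union_map_right [Fintype W₁] [Fintype W₂] (h₁ : [a₁, b₁, c₁].Nodup)
    (h₂ : [a₂, b₂, c₂].Nodup) : univ.map inl ∪ univ.map (right h₁ h₂) = univ := by
  refine eq_univ_of_forall fun v ↦ ?_
  rcases v.eq_inl_or_eq_inr with ⟨x, rfl⟩ | ⟨w, rfl⟩
  · exact mem_union_left _ (mem_map_of_mem inl (mem_univ x))
  · rw [← (right_eq_inr_iff h₁ h₂).2 rfl]
    exact mem_union_right _ (mem_map_of_mem _ (mem_univ _))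

lemma map_inl_inter_map_right [Fintype W₁] [Fintype W₂] (h₁ : [a₁, b₁, c₁].Nodup)
    (h₂ : [a₂, b₂, c₂].Nodup) :
    univ.map inl ∩ univ.map (right h₁ h₂) = ({a₁, b₁, c₁} : Finset W₁).map inl := by
  ext v
  simp only [mem_inter, mem_map, mem_univ, true_and, mem_insert, mem_singleton]
  constructor
  · rintro ⟨⟨x, rfl⟩, z, hz⟩
    rw [right_eq_inl_iff] at hz
    exact ⟨x, by tauto, rfl⟩
  · rintro ⟨x, hx, rfl⟩
    simp only [right_eq_inl_iff]
    exact ⟨⟨x, rfl⟩, by grind⟩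

lemma map_triangle_eq_map_right (h₁ : [a₁, b₁, c₁].Nodup) (h₂ : [a₂, b₂, c₂].Nodup) :
    ({a₁, b₁, c₁} : Finset W₁).map inl = ({a₂, b₂, c₂} : Finset W₂).map (right h₁ h₂) := by
  simp only [map_insert, map_singleton, (right_eq_inl_iff h₁ h₂).2 (Or.inl ⟨rfl, rfl⟩),
    (right_eq_inl_iff h₁ h₂).2 (Or.inr (Or.inl ⟨rfl, rfl⟩)),
    (right_eq_inl_iff h₁ h₂).2 (Or.inr (Or.inr ⟨rfl, rfl⟩))]

end GluedVert

lemma nodup_of_triangle {W : Type*} {G : SimpleGraph W} {a b c : W}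
    (ht : G.Adj a b ∧ G.Adj b c ∧ G.Adj a c) : [a, b, c].Nodup := by
  simp [ht.1.ne, ht.2.1.ne, ht.2.2.ne]

lemma is3Clique_of_triangle {W : Type*} {G : SimpleGraph W} {a b c : W}
    (ht : G.Adj a b ∧ G.Adj b c ∧ G.Adj a c) : G.IsNClique 3 {a, b, c} :=
  SimpleGraph.is3Clique_triple_iff.2 ⟨ht.1, ht.2.2, ht.2.1⟩

open GluedVert

lemma glueOnTriangles_adj_inl_inl :
    (glueOnTriangles G₁ G₂ a₁ b₁ c₁ a₂ b₂ c₂).Adj (inl x) (inl y) ↔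
      G₁.Adj x y ∧ ¬ (InTriangle a₁ b₁ c₁ x ∧ InTriangle a₁ b₁ c₁ y) := by
  refine (SimpleGraph.fromRel_adj _ _ _).trans ⟨?_, fun h ↦ ⟨inl.injective.ne h.1.ne, Or.inl h⟩⟩
  rintro ⟨-, h | h⟩
  · exact h
  · exact ⟨h.1.symm, fun hT ↦ h.2 hT.symm⟩

lemma glueOnTriangles_adj_inl_inr :
    (glueOnTriangles G₁ G₂ a₁ b₁ c₁ a₂ b₂ c₂).Adj (inl x) (inr w) ↔
      (x = a₁ ∧ G₂.Adj a₂ w) ∨ (x = b₁ ∧ G₂.Adj b₂ w) ∨ (x = c₁ ∧ G₂.Adj c₂ w) := by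
  refine (SimpleGraph.fromRel_adj _ _ _).trans ⟨?_, fun h ↦ ⟨inl_ne_inr, Or.inl h⟩⟩
  rintro ⟨-, h | h⟩
  · exact h
  · exact h.elim

lemma glueOnTriangles_adj_inr_inr :
    (glueOnTriangles G₁ G₂ a₁ b₁ c₁ a₂ b₂ c₂).Adj (inr w) (inr w') ↔ G₂.Adj w w' := by
  refine (SimpleGraph.fromRel_adj _ _ _).trans ⟨?_, fun h ↦ ⟨?_, Or.inl h⟩⟩
  · rintro ⟨-, h | h⟩
    · exact h
    · exact h.symm
  · exact inr.injective.ne fun hww' ↦ h.ne (congrArg Subtype.val hww')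

lemma not_map_inl_adj_inr {u : GluedVert W₁ W₂ a₂ b₂ c₂} : ¬ (G₁.map inl).Adj u (inr w) := by
  rw [SimpleGraph.map_adj]
  rintro ⟨_, _, -, -, h⟩
  exact inl_ne_inr h

lemma map_right_adj_inl_inl (h₁ : [a₁, b₁, c₁].Nodup)
    (ht₂ : G₂.Adj a₂ b₂ ∧ G₂.Adj b₂ c₂ ∧ G₂.Adj a₂ c₂) :
    (G₂.map (right h₁ (nodup_of_triangle ht₂))).Adj (inl x) (inl y) ↔
      InTriangle a₁ b₁ c₁ x ∧ InTriangle a₁ b₁ c₁ y ∧ x ≠ y := by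
  have hloopless := fun z ↦ G₂.irrefl (v := z)
  have hsymm := G₂.adj_comm
  simp only [SimpleGraph.map_adj, right_eq_inl_iff, InTriangle]
  simp only [List.nodup_cons, List.mem_cons, List.not_mem_nil] at h₁
  grind

lemma map_right_adj_inl_inr (h₁ : [a₁, b₁, c₁].Nodup) (h₂ : [a₂, b₂, c₂].Nodup) :
    (G₂.map (right h₁ h₂)).Adj (inl x) (inr w) ↔
      (x = a₁ ∧ G₂.Adj a₂ w) ∨ (x = b₁ ∧ G₂.Adj b₂ w) ∨ (x = c₁ ∧ G₂.Adj c₂ w) := by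
  simp only [SimpleGraph.map_adj, right_eq_inl_iff, right_eq_inr_iff]
  grind

lemma map_right_adj_inr_inr (h₁ : [a₁, b₁, c₁].Nodup) (h₂ : [a₂, b₂, c₂].Nodup) :
    (G₂.map (right h₁ h₂)).Adj (inr w) (inr w') ↔ G₂.Adj w w' := by
  simp only [SimpleGraph.map_adj, right_eq_inr_iff]
  grind

lemma glueOnTriangles_eq_symmDiff
    (ht₁ : G₁.Adj a₁ b₁ ∧ G₁.Adj b₁ c₁ ∧ G₁.Adj a₁ c₁)
    (ht₂ : G₂.Adj a₂ b₂ ∧ G₂.Adj b₂ c₂ ∧ G₂.Adj a₂ c₂) :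
    glueOnTriangles G₁ G₂ a₁ b₁ c₁ a₂ b₂ c₂ =
      G₁.map inl ∆ G₂.map (right (nodup_of_triangle ht₁) (nodup_of_triangle ht₂)) := by
  have h₁ := nodup_of_triangle ht₁
  have h₂ := nodup_of_triangle ht₂
  have hmixed (x w) : (glueOnTriangles G₁ G₂ a₁ b₁ c₁ a₂ b₂ c₂).Adj (inl x) (inr w) ↔
      (G₁.map inl ∆ G₂.map (right h₁ h₂)).Adj (inl x) (inr w) := by
    simp only [symmDiff_def, SimpleGraph.sup_adj, SimpleGraph.sdiff_adj,
      glueOnTriangles_adj_inl_inr, map_right_adj_inl_inr, not_map_inl_adj_inr, false_and,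
      not_false_eq_true, and_true, false_or]
  ext u v
  rcases u.eq_inl_or_eq_inr with ⟨x, rfl⟩ | ⟨w, rfl⟩ <;>
    rcases v.eq_inl_or_eq_inr with ⟨y, rfl⟩ | ⟨w', rfl⟩
  · have hclique : InTriangle a₁ b₁ c₁ x → InTriangle a₁ b₁ c₁ y → x ≠ y → G₁.Adj x y :=
      fun hx hy ↦ (is3Clique_of_triangle ht₁).isClique (by simpa [InTriangle] using hx)
        (by simpa [InTriangle] using hy)
    have hne : G₁.Adj x y → x ≠ y := SimpleGraph.Adj.ne
    simp only [symmDiff_def, SimpleGraph.sup_adj, SimpleGraph.sdiff_adj,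
      glueOnTriangles_adj_inl_inl, SimpleGraph.map_adj_apply, map_right_adj_inl_inl h₁ ht₂]
    tauto
  · exact hmixed x w'
  · rw [SimpleGraph.adj_comm, hmixed, SimpleGraph.adj_comm]
  · simp only [symmDiff_def, SimpleGraph.sup_adj, SimpleGraph.sdiff_adj,
      glueOnTriangles_adj_inr_inr, map_right_adj_inr_inr, not_map_inl_adj_inr, false_and,
      not_false_eq_true, and_true, false_or]

lemma isPrimitiveOn_glueOnTriangles [Fintype W₁] [Fintype W₂]
    (h₁ : CompletedPrimitive G₁) (h₂ : CompletedPrimitive G₂)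
    (ht₁ : G₁.Adj a₁ b₁ ∧ G₁.Adj b₁ c₁ ∧ G₁.Adj a₁ c₁)
    (ht₂ : G₂.Adj a₂ b₂ ∧ G₂.Adj b₂ c₂ ∧ G₂.Adj a₂ c₂) :
    IsPrimitiveOn (glueOnTriangles G₁ G₂ a₁ b₁ c₁ a₂ b₂ c₂) univ := by
  have hnd₁ := nodup_of_triangle ht₁
  have hnd₂ := nodup_of_triangle ht₂
  have hinter := map_inl_inter_map_right hnd₁ hnd₂
  rw [glueOnTriangles_eq_symmDiff ht₁ ht₂, ← map_inl_union_map_right hnd₁ hnd₂]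
  refine (h₁.isPrimitiveOn_map inl).symmDiff (h₂.isPrimitiveOn_map (right hnd₁ hnd₂)) ?_ ?_ ?_
  · rw [hinter, card_map, (is3Clique_of_triangle ht₁).card_eq]
  · rw [hinter, coe_map]
    exact (is3Clique_of_triangle ht₁).isClique.map
  · rw [hinter, map_triangle_eq_map_right hnd₁ hnd₂, coe_map]
    exact (is3Clique_of_triangle ht₂).isClique.map

lemma not_connected_induce_compl_triangle [Fintype W₁] [Fintype W₂]
    (h₁ : CompletedPrimitive G₁) (h₂ : CompletedPrimitive G₂)
    (ht₁ : G₁.Adj a₁ b₁ ∧ G₁.Adj b₁ c₁ ∧ G₁.Adj a₁ c₁)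
    (ht₂ : G₂.Adj a₂ b₂ ∧ G₂.Adj b₂ c₂ ∧ G₂.Adj a₂ c₂) :
    ¬ ((glueOnTriangles G₁ G₂ a₁ b₁ c₁ a₂ b₂ c₂).induce {inl a₁, inl b₁, inl c₁}ᶜ).Connected := by
  have hnd₁ := nodup_of_triangle ht₁
  have hnd₂ := nodup_of_triangle ht₂
  have hinter := map_inl_inter_map_right hnd₁ hnd₂
  have hsep := (h₁.isPrimitiveOn_map inl).not_preconnected_induce_compl_inter
    (h₂.isPrimitiveOn_map (right hnd₁ hnd₂))
    (by rw [hinter, card_map, (is3Clique_of_triangle ht₁).card_eq])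
  rw [← glueOnTriangles_eq_symmDiff ht₁ ht₂, hinter, map_insert, map_insert,
    map_singleton, coe_insert, coe_insert, coe_singleton] at hsep
  exact fun hconn ↦ hsep hconn.preconnected

end Gluing

/-- Gluing two completed primitive graphs along triangles and deleting the triangle edges
yields a completed primitive 4-regular graph which is *reducible*: its vertex-connectivity
is exactly 3, the three identified vertices disconnecting it. -/
theorem glueOnTriangles_completedPrimitive {W₁ W₂ : Type*} [Fintype W₁] [Fintype W₂]
    (G₁ : SimpleGraph W₁) (G₂ : SimpleGraph W₂)
    (h₁ : CompletedPrimitive G₁) (h₂ : CompletedPrimitive G₂)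
    (a₁ b₁ c₁ : W₁) (a₂ b₂ c₂ : W₂)
    (ht₁ : G₁.Adj a₁ b₁ ∧ G₁.Adj b₁ c₁ ∧ G₁.Adj a₁ c₁)
    (ht₂ : G₂.Adj a₂ b₂ ∧ G₂.Adj b₂ c₂ ∧ G₂.Adj a₂ c₂) :
    CompletedPrimitive (glueOnTriangles G₁ G₂ a₁ b₁ c₁ a₂ b₂ c₂) ∧
    (∀ S : Finset (GluedVert W₁ W₂ a₂ b₂ c₂), S.card ≤ 2 →
      ((glueOnTriangles G₁ G₂ a₁ b₁ c₁ a₂ b₂ c₂).induce ((↑S : Set _)ᶜ)).Connected) ∧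
    ¬ ((glueOnTriangles G₁ G₂ a₁ b₁ c₁ a₂ b₂ c₂).induce
        (({Sum.inl a₁, Sum.inl b₁, Sum.inl c₁} : Set (GluedVert W₁ W₂ a₂ b₂ c₂))ᶜ)).Connected := by
  have hprim := isPrimitiveOn_glueOnTriangles h₁ h₂ ht₁ ht₂
  have : Nonempty (GluedVert W₁ W₂ a₂ b₂ c₂) := ⟨GluedVert.inl a₁⟩
  exact ⟨hprim.completedPrimitive, fun _ hS ↦ hprim.connected_induce_compl hS,
    not_connected_induce_compl_triangle h₁ h₂ ht₁ ht₂⟩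
end
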